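/- (Uniform localization from above.) Let ρ > 0, c > 0, x₀ ≥ 0, b₀ > 0, and let F : ℝ → ℝ be continuously differentiable with F(0) = 0 and −b₀ ≤ F'(y) ≤ 0 for all y ∈ ℝ. Fix K₁ ≥ 1 and T > 0; let β > 0 be the unique positive solution of log β + b₀·β = −T·b₀, and set N = K₁·β^{-2}·e^{2ρ(T+β)}. Then for every admissible control u and every trajectory x associated with u such that ∫₀^∞ e^{-ρt} u(t) dt ≤ K₁ and t ↦ e^{-ρt}(log u(t) − c·x(t)²) is Lebesgue integrable on [0,∞), there exist an admissible control ũ and a trajectory x̃ associated with ũ satisfying: (i) ũ(t) = min(u(t), N) for a.e. t ∈ [0,T]; (ii) 0 ≤ x̃(t) ≤ x(t) for all t ≥ 0; (iii) t ↦ e^{-ρt}(log ũ(t) − c·x̃(t)²) is Lebesgue integrable on [0,∞) and B(ũ,x̃) ≥ B(u,x). -/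

import Mathlib

open MeasureTheory Filter

/-- A control `u` is admissible: measurable, locally integrable on `[0,∞)`,
and positive almost everywhere on `[0,∞)`. -/
def Admissible (u : ℝ → ℝ) : Prop :=
  Measurable u ∧ (∀ T : ℝ, 0 < T → IntegrableOn u (Set.Icc 0 T)) ∧
    (∀ᵐ t ∂(volume.restrict (Set.Ici (0:ℝ))), 0 < u t)

/-- `x` is a trajectory associated with the control `u`, dynamics `F` and
initial state `x₀`. -/
def Trajectory (F : ℝ → ℝ) (x₀ : ℝ) (u x : ℝ → ℝ) : Prop :=
  ContinuousOn x (Set.Ici 0) ∧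
    ∀ t : ℝ, 0 ≤ t → x t = x₀ + ∫ s in (0:ℝ)..t, (F (x s) + u s)

/-- The objective functional `B(u,x) = ∫₀^∞ e^{-ρt}(log u(t) - c x(t)²) dt`. -/
noncomputable def objective (ρ c : ℝ) (u x : ℝ → ℝ) : ℝ :=
  ∫ t in Set.Ioi (0:ℝ), Real.exp (-ρ * t) * (Real.log (u t) - c * (x t) ^ 2)

/-- Integrability of the integrand of the objective functional. -/
def ObjIntegrable (ρ c : ℝ) (u x : ℝ → ℝ) : Prop :=
  IntegrableOn (fun t => Real.exp (-ρ * t) * (Real.log (u t) - c * (x t) ^ 2))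
    (Set.Ioi (0:ℝ))

/-!
Cap the control at level `N` on `[0, T]` and repay the removed mass `I` at the constant rate `I` on
`(T, T + β]`. Since `F` is antitone and `b₀`-Lipschitz, the advantage `x - x̃` gained from the cap
decays at most like `e^{-b₀ t}`, so it still exceeds `I e^{-b₀ (T + β)} ≥ I β` when everything is
repaid; hence the new state stays below the old one. In the objective, capping loses at most `I / N`
because `log` has slope at most `1 / N` above `N`. On `(T, T + β]` the gain is at least
`e^{-ρ (T + β)} ∫ I / ũ`, and as the discounted budget bounds `∫ ũ` there by `K₁ e^{ρ (T + β)}`,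
the inequality between the arithmetic and the harmonic mean makes it at least
`I β² e^{-2ρ (T + β)} / K₁ ≥ I / N`.
-/

open Set Real
open scoped NNReal BoundedContinuousFunction

section GlobalPicardLindelof

/-- A weight in the sense of Bielecki: in the supremum norm of `z / bieleckiWeight b g`, with
`g t = ‖f t 0‖`, the Picard operator of a vector field `f` that is `b`-Lipschitz in space is a
contraction on the whole half-line, so that no gluing of local solutions is needed. -/
noncomputable def bieleckiWeight (b : ℝ) (g : ℝ → ℝ) (t : ℝ) : ℝ :=
  exp ((b + 1) * t) * (1 + ∫ s in (0:ℝ)..t, g s)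

section Weight

variable {b t : ℝ} {g : ℝ → ℝ}

lemma continuous_bieleckiWeight (b : ℝ) (hg : Continuous g) : Continuous (bieleckiWeight b g) := by
  have := intervalIntegral.continuous_primitive (μ := volume)
    (fun a b => hg.intervalIntegrable a b) 0
  unfold bieleckiWeight
  fun_prop

lemma one_add_integral_le_bieleckiWeight (hb : 0 ≤ b) (hg₀ : 0 ≤ g) (ht : 0 ≤ t) :
    1 + ∫ s in (0:ℝ)..t, g s ≤ bieleckiWeight b g t := by
  have hint : 0 ≤ ∫ s in (0:ℝ)..t, g s := intervalIntegral.integral_nonneg_of_forall ht hg₀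
  exact le_mul_of_one_le_left (by positivity) (one_le_exp (by positivity))

lemma one_le_bieleckiWeight (hb : 0 ≤ b) (hg₀ : 0 ≤ g) (ht : 0 ≤ t) :
    1 ≤ bieleckiWeight b g t :=
  (le_add_of_nonneg_right (intervalIntegral.integral_nonneg_of_forall ht hg₀)).trans
    (one_add_integral_le_bieleckiWeight hb hg₀ ht)

lemma bieleckiWeight_norm_pos {E : Type*} [NormedAddCommGroup E] (f : ℝ → E → E) (b : ℝ≥0)
    (ht : 0 ≤ t) : 0 < bieleckiWeight b (fun s => ‖f s 0‖) t :=
  zero_lt_one.trans_le (one_le_bieleckiWeight b.coe_nonneg (fun s => norm_nonneg (f s 0)) ht)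

lemma add_one_mul_integral_bieleckiWeight_le (b : ℝ) (hg : Continuous g) (hg₀ : 0 ≤ g)
    (ht : 0 ≤ t) : (b + 1) * ∫ s in (0:ℝ)..t, bieleckiWeight b g s ≤ bieleckiWeight b g t := by
  have hderiv : ∀ s, HasDerivAt (bieleckiWeight b g)
      ((b + 1) * bieleckiWeight b g s + exp ((b + 1) * s) * g s) s := fun s => by
    have hexp : HasDerivAt (fun s => exp ((b + 1) * s)) (exp ((b + 1) * s) * (b + 1)) s := by
      simpa using ((hasDerivAt_id s).const_mul (b + 1)).exp
    refine (hexp.mul ((hg.integral_hasStrictDerivAt 0 s).hasDerivAt.const_add 1)).congr_deriv ?_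
    simp only [bieleckiWeight]
    ring
  have hw := continuous_bieleckiWeight b hg
  have hFTC := intervalIntegral.integral_eq_sub_of_hasDerivAt (a := 0) (b := t)
    (fun s _ => hderiv s) ((by fun_prop : Continuous _).intervalIntegrable _ _)
  have hw₀ : bieleckiWeight b g 0 = 1 := by simp [bieleckiWeight]
  calc (b + 1) * ∫ s in (0:ℝ)..t, bieleckiWeight b g s
      = ∫ s in (0:ℝ)..t, (b + 1) * bieleckiWeight b g s :=
        (intervalIntegral.integral_const_mul _ _).symm
    _ ≤ ∫ s in (0:ℝ)..t, ((b + 1) * bieleckiWeight b g s + exp ((b + 1) * s) * g s) := by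
        refine intervalIntegral.integral_mono ht
          ((by fun_prop : Continuous _).intervalIntegrable _ _)
          ((by fun_prop : Continuous _).intervalIntegrable _ _) fun s => ?_
        exact le_add_of_nonneg_right (mul_nonneg (exp_pos _).le (hg₀ s))
    _ ≤ bieleckiWeight b g t := by linarith

end Weight

variable {E : Type*} [NormedAddCommGroup E] [NormedSpace ℝ E] {f : ℝ → E → E} {b : ℝ≥0}

/-- The path `t ↦ w t • z t` on `ℝ` with profile `z` on the half-line, where `w` is the Bielecki
weight of the vector field `f`. -/
noncomputable def weightedPath (f : ℝ → E → E) (b : ℝ≥0) (z : ℝ≥0 →ᵇ E) (t : ℝ) : E :=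
  bieleckiWeight b (fun s => ‖f s 0‖) t • z t.toNNReal

lemma continuous_weightedPath (hf : Continuous fun p : ℝ × E => f p.1 p.2) (z : ℝ≥0 →ᵇ E) :
    Continuous (weightedPath f b z) := by
  have hw : Continuous (bieleckiWeight b fun s => ‖f s 0‖) :=
    continuous_bieleckiWeight _ (by fun_prop)
  exact hw.smul (z.continuous.comp continuous_real_toNNReal)

lemma continuous_field_weightedPath (hf : Continuous fun p : ℝ × E => f p.1 p.2)
    (z : ℝ≥0 →ᵇ E) : Continuous fun s => f s (weightedPath f b z s) :=
  hf.comp (continuous_id.prodMk (continuous_weightedPath hf z))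

lemma norm_weightedPath_sub_le (z z' : ℝ≥0 →ᵇ E) {t : ℝ} (ht : 0 ≤ t) :
    ‖weightedPath f b z t - weightedPath f b z' t‖ ≤
      bieleckiWeight b (fun s => ‖f s 0‖) t * dist z z' := by
  have hw := (bieleckiWeight_norm_pos f b ht).le
  rw [weightedPath, weightedPath, ← smul_sub, norm_smul, norm_of_nonneg hw, ← dist_eq_norm]
  exact mul_le_mul_of_nonneg_left (z.dist_coe_le_dist _) hw

lemma norm_integral_field_sub_le (hf : Continuous fun p : ℝ × E => f p.1 p.2)
    (hL : ∀ t, LipschitzWith b (f t)) (z z' : ℝ≥0 →ᵇ E) {t : ℝ} (ht : 0 ≤ t) :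
    ‖(∫ s in (0:ℝ)..t, f s (weightedPath f b z s)) -
        ∫ s in (0:ℝ)..t, f s (weightedPath f b z' s)‖ ≤
      bieleckiWeight b (fun s => ‖f s 0‖) t * ((b / (b + 1) : ℝ≥0) * dist z z') := by
  set w := bieleckiWeight b fun s => ‖f s 0‖
  have hg : Continuous fun s => ‖f s 0‖ := by fun_prop
  have hw : Continuous w := continuous_bieleckiWeight _ hg
  have hpointwise : ∀ s ∈ Ioc 0 t,
      ‖f s (weightedPath f b z s) - f s (weightedPath f b z' s)‖ ≤ b * dist z z' * w s :=
    fun s hs => calc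
      _ ≤ b * ‖weightedPath f b z s - weightedPath f b z' s‖ := (hL s).norm_sub_le _ _
      _ ≤ b * (w s * dist z z') := by gcongr; exact norm_weightedPath_sub_le z z' hs.1.le
      _ = b * dist z z' * w s := by ring
  rw [← intervalIntegral.integral_sub
    ((continuous_field_weightedPath hf z).intervalIntegrable _ _)
    ((continuous_field_weightedPath hf z').intervalIntegrable _ _)]
  calc _ ≤ ∫ s in (0:ℝ)..t, b * dist z z' * w s :=
        intervalIntegral.norm_integral_le_of_norm_le ht (ae_of_all _ hpointwise)
          ((hw.const_mul _).intervalIntegrable _ _)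
    _ = b / (b + 1) * dist z z' * ((b + 1) * ∫ s in (0:ℝ)..t, w s) := by
        rw [intervalIntegral.integral_const_mul]
        field_simp
    _ ≤ b / (b + 1) * dist z z' * w t := by
        gcongr
        exact add_one_mul_integral_bieleckiWeight_le _ hg (fun s => norm_nonneg (f s 0)) ht
    _ = _ := by push_cast; ring

lemma norm_add_integral_field_le (hf : Continuous fun p : ℝ × E => f p.1 p.2)
    (hL : ∀ t, LipschitzWith b (f t)) (z₀ : E) (z : ℝ≥0 →ᵇ E) {t : ℝ} (ht : 0 ≤ t) :
    ‖z₀ + ∫ s in (0:ℝ)..t, f s (weightedPath f b z s)‖ ≤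
      bieleckiWeight b (fun s => ‖f s 0‖) t *
        (‖z₀‖ + 1 + (b / (b + 1) : ℝ≥0) * dist z 0) := by
  set w := bieleckiWeight b fun s => ‖f s 0‖
  have hg₀ : (0 : ℝ → ℝ) ≤ fun s => ‖f s 0‖ := fun s => norm_nonneg (f s 0)
  have hw : 1 ≤ w t := one_le_bieleckiWeight b.coe_nonneg hg₀ ht
  have hzero : ‖∫ s in (0:ℝ)..t, f s (weightedPath f b 0 s)‖ ≤ w t := by
    simp only [weightedPath, BoundedContinuousFunction.coe_zero, Pi.zero_apply, smul_zero]
    calc _ ≤ ∫ s in (0:ℝ)..t, ‖f s 0‖ := intervalIntegral.norm_integral_le_integral_norm ht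
      _ ≤ w t := by linarith [one_add_integral_le_bieleckiWeight b.coe_nonneg hg₀ ht]
  have hdiff := norm_integral_field_sub_le hf hL z 0 ht
  set J := ∫ s in (0:ℝ)..t, f s (weightedPath f b z s)
  set J₀ := ∫ s in (0:ℝ)..t, f s (weightedPath f b 0 s)
  calc ‖z₀ + J‖ = ‖z₀ + J₀ + (J - J₀)‖ := by congr 1; abel
    _ ≤ ‖z₀‖ + ‖J₀‖ + ‖J - J₀‖ := norm_add₃_le
    _ ≤ w t * ‖z₀‖ + w t + w t * ((b / (b + 1) : ℝ≥0) * dist z 0) := by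
        gcongr
        exact le_mul_of_one_le_left (norm_nonneg _) hw
    _ = _ := by ring

/-- The Picard operator `z ↦ z₀ + ∫₀ᵗ f s (z s) ds`, conjugated by the Bielecki weight so that it
acts on bounded profiles. -/
noncomputable def weightedPicard (hf : Continuous fun p : ℝ × E => f p.1 p.2)
    (hL : ∀ t, LipschitzWith b (f t)) (z₀ : E) (z : ℝ≥0 →ᵇ E) : ℝ≥0 →ᵇ E :=
  BoundedContinuousFunction.ofNormedAddCommGroup
    (fun t => (bieleckiWeight b (fun s => ‖f s 0‖) t)⁻¹ •
      (z₀ + ∫ s in (0:ℝ)..t, f s (weightedPath f b z s)))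
    (by
      have hw : Continuous (bieleckiWeight b fun s => ‖f s 0‖) :=
        continuous_bieleckiWeight _ (by fun_prop)
      have hint := intervalIntegral.continuous_primitive (μ := volume)
        (fun a c => (continuous_field_weightedPath (b := b) hf z).intervalIntegrable a c) 0
      refine ((hw.comp NNReal.continuous_coe).inv₀ fun t => ?_).smul
        (continuous_const.add (hint.comp NNReal.continuous_coe))
      exact (bieleckiWeight_norm_pos f b t.coe_nonneg).ne')
    (‖z₀‖ + 1 + (b / (b + 1) : ℝ≥0) * dist z 0)
    (fun t => by
      have hw := bieleckiWeight_norm_pos f b t.coe_nonneg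
      rw [norm_smul, norm_inv, norm_of_nonneg hw.le, inv_mul_le_iff₀ hw]
      exact norm_add_integral_field_le hf hL z₀ z t.coe_nonneg)

lemma contractingWith_weightedPicard (hf : Continuous fun p : ℝ × E => f p.1 p.2)
    (hL : ∀ t, LipschitzWith b (f t)) (z₀ : E) :
    ContractingWith (b / (b + 1)) (weightedPicard hf hL z₀) := by
  refine ⟨(div_lt_one (by positivity)).2 (lt_add_one b),
    LipschitzWith.of_dist_le_mul fun z z' => ?_⟩
  rw [BoundedContinuousFunction.dist_le (by positivity)]
  intro t
  have hw := bieleckiWeight_norm_pos f b t.coe_nonneg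
  simp only [weightedPicard, BoundedContinuousFunction.coe_ofNormedAddCommGroup]
  rw [dist_eq_norm, ← smul_sub, add_sub_add_left_eq_sub, norm_smul, norm_inv,
    norm_of_nonneg hw.le, inv_mul_le_iff₀ hw]
  exact norm_integral_field_sub_le hf hL z z' t.coe_nonneg

theorem exists_continuous_eq_add_integral [CompleteSpace E]
    (hf : Continuous fun p : ℝ × E => f p.1 p.2) (hL : ∀ t, LipschitzWith b (f t)) (z₀ : E) :
    ∃ z : ℝ → E, Continuous z ∧ ∀ t, 0 ≤ t → z t = z₀ + ∫ s in (0:ℝ)..t, f s (z s) := by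
  obtain ⟨z, hfix, -⟩ :=
    (contractingWith_weightedPicard hf hL z₀).exists_fixedPoint 0 (edist_ne_top _ _)
  refine ⟨weightedPath f b z, continuous_weightedPath hf z, fun t ht => ?_⟩
  have hw := bieleckiWeight_norm_pos f b ht
  calc weightedPath f b z t
      = bieleckiWeight b (fun s => ‖f s 0‖) t • weightedPicard hf hL z₀ z t.toNNReal := by
        rw [hfix, weightedPath]
    _ = z₀ + ∫ s in (0:ℝ)..t, f s (weightedPath f b z s) := by
        simp only [weightedPicard, BoundedContinuousFunction.coe_ofNormedAddCommGroup,
          coe_toNNReal _ ht, smul_inv_smul₀ hw.ne']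

end GlobalPicardLindelof

section Trajectories

variable {F : ℝ → ℝ} {b : ℝ≥0} {x₀ y₀ s τ m : ℝ} {u v x y : ℝ → ℝ}

lemma intervalIntegrable_of_locallyIntegrableOn_Ici {E : Type*} [NormedAddCommGroup E]
    {f : ℝ → E} {a : ℝ} (hf : LocallyIntegrableOn f (Ici a)) (hs : a ≤ s) (hτ : a ≤ τ) :
    IntervalIntegrable f volume s τ :=
  (hf.integrableOn_compact_subset (fun _ ht => (le_inf hs hτ).trans ht.1)
    isCompact_uIcc).intervalIntegrable

lemma Admissible.locallyIntegrableOn (hu : Admissible u) : LocallyIntegrableOn u (Ici 0) := by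
  refine (locallyIntegrableOn_iff isClosed_Ici.isLocallyClosed).2 fun k hk₀ hk => ?_
  obtain ⟨R, hR⟩ := hk.bddAbove
  exact (hu.2.1 (max R 1) (by positivity)).mono_set fun t ht =>
    ⟨hk₀ ht, (hR ht).trans (le_max_left _ _)⟩

lemma Admissible.ae_pos_restrict (hu : Admissible u) {S : Set ℝ} (hS : S ⊆ Ici 0) :
    ∀ᵐ t ∂volume.restrict S, 0 < u t :=
  ae_restrict_of_ae_restrict_of_subset hS hu.2.2

theorem exists_trajectory (hF : LipschitzWith b F) (hv : LocallyIntegrableOn v (Ici 0)) (x₀ : ℝ) :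
    ∃ x, Trajectory F x₀ v x := by
  set μ : Measure ℝ := volume.restrict (Ici 0)
  set V : ℝ → ℝ := fun t => ∫ s in (0:ℝ)..t, v s ∂μ
  have hV : Continuous V := by
    have hv' : LocallyIntegrable v μ :=
      (locallyIntegrableOn_iff_locallyIntegrable_restrict isClosed_Ici).1 hv
    exact intervalIntegral.continuous_primitive
      (fun a c => (hv'.integrableOn_isCompact isCompact_uIcc).intervalIntegrable) 0
  have hV_eq : ∀ t, 0 ≤ t → V t = ∫ s in (0:ℝ)..t, v s := fun t ht => by
    simp only [V, μ, intervalIntegral.integral_of_le ht]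
    rw [Measure.restrict_restrict_of_subset fun s hs => hs.1.le]
  obtain ⟨z, hz, hz_eq⟩ := exists_continuous_eq_add_integral (f := fun s z => F (z + V s)) (b := b)
    (hF.continuous.comp (by fun_prop))
    (fun t => .of_dist_le_mul fun y z => by simpa using hF.dist_le_mul (y + V t) (z + V t)) x₀
  have hFx : Continuous fun s => F (z s + V s) := hF.continuous.comp (by fun_prop)
  refine ⟨fun t => z t + V t, (hz.add hV).continuousOn, fun t ht => ?_⟩
  rw [intervalIntegral.integral_add (hFx.intervalIntegrable _ _)
    (intervalIntegrable_of_locallyIntegrableOn_Ici hv le_rfl ht), ← hV_eq t ht, ← add_assoc,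
    ← hz_eq t ht]

lemma Trajectory.continuousOn_field (hF : Continuous F) (hx : Trajectory F x₀ u x) (hs : 0 ≤ s) :
    ContinuousOn (fun t => F (x t)) (Icc s τ) :=
  hF.comp_continuousOn (hx.1.mono fun _ ht => hs.trans ht.1)

lemma Trajectory.eq_add_integral (hF : Continuous F) (hu : LocallyIntegrableOn u (Ici 0))
    (hx : Trajectory F x₀ u x) (hs : 0 ≤ s) (hsτ : s ≤ τ) :
    x τ = x s + (∫ r in s..τ, F (x r)) + ∫ r in s..τ, u r := by
  have hsplit : ∀ a c, 0 ≤ a → a ≤ c → IntervalIntegrable (fun r => F (x r)) volume a c ∧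
      IntervalIntegrable u volume a c := fun a c ha hac =>
    ⟨(hx.continuousOn_field hF ha).intervalIntegrable_of_Icc hac,
      intervalIntegrable_of_locallyIntegrableOn_Ici hu ha (ha.trans hac)⟩
  obtain ⟨hF₀, hu₀⟩ := hsplit 0 s le_rfl hs
  obtain ⟨hF₁, hu₁⟩ := hsplit s τ hs hsτ
  rw [hx.2 s hs, hx.2 τ (hs.trans hsτ), add_assoc, add_assoc,
    ← intervalIntegral.integral_add hF₁ hu₁,
    intervalIntegral.integral_add_adjacent_intervals (hF₀.add hu₀) (hF₁.add hu₁)]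

lemma hasDerivWithinAt_integral_Ici {E : Type*} [NormedAddCommGroup E] [NormedSpace ℝ E]
    [CompleteSpace E] {f : ℝ → E} (hf : ContinuousOn f (Icc s τ)) {t : ℝ} (ht : t ∈ Ico s τ) :
    HasDerivWithinAt (fun t => ∫ r in s..t, f r) (f t) (Ici t) t := by
  have hnhds : Icc s τ ∈ nhdsWithin t (Ioi t) :=
    mem_of_superset (Ioo_mem_nhdsGT ht.2) fun r hr => ⟨ht.1.trans hr.1.le, hr.2.le⟩
  refine intervalIntegral.integral_hasDerivWithinAt_right
    ((hf.mono (Icc_subset_Icc_right ht.2.le)).intervalIntegrable_of_Icc ht.1)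
    ⟨Icc s τ, hnhds, hf.aestronglyMeasurable measurableSet_Icc⟩ ?_
  exact (hf t ⟨ht.1, ht.2.le⟩).mono_of_mem_nhdsWithin hnhds

theorem exp_neg_mul_le_of_neg_mul_posPart_le_deriv {p p' : ℝ → ℝ} {b : ℝ} (hb : 0 ≤ b)
    (hsτ : s ≤ τ) (hp : ContinuousOn p (Icc s τ))
    (hderiv : ∀ t ∈ Ico s τ, HasDerivWithinAt p (p' t) (Ici t) t)
    (hp' : ∀ t ∈ Ico s τ, -(b * max (p t) 0) ≤ p' t) (hs : 0 ≤ p s) :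
    exp (-b * (τ - s)) * p s ≤ p τ := by
  -- Strict barrier: `p` stays above the exponential minus `ε (1 + t - s)` for every `ε > 0`.
  have hbarrier : ∀ ε > 0, exp (-b * (τ - s)) * p s - ε * (1 + τ - s) ≤ p τ := fun ε hε => by
    have hB : ∀ t, HasDerivAt (fun t => -(exp (-b * (t - s)) * p s) + ε * (1 + t - s))
        (b * (exp (-b * (t - s)) * p s) + ε) t := fun t => by
      have hexp := (((hasDerivAt_id t).sub_const s).const_mul (-b)).exp
      have hlin := (((hasDerivAt_id t).const_add 1).sub_const s).const_mul ε
      refine ((hexp.mul_const (p s)).neg.add hlin).congr_deriv ?_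
      simp only [id_eq]
      ring
    have hle := image_le_of_deriv_right_lt_deriv_boundary hp.neg (fun t ht => (hderiv t ht).neg)
      (by simpa using hε.le) hB (fun t ht heq => ?_) (right_mem_Icc.2 hsτ)
    · simp only [Pi.neg_apply] at hle
      linarith
    · have hmax : max (p t) 0 ≤ exp (-b * (t - s)) * p s := by
        have : 0 ≤ ε * (1 + t - s) := mul_nonneg hε.le (by linarith [ht.1])
        simp only [Pi.neg_apply] at heq
        exact max_le (by linarith) (by positivity)
      linarith [hp' t ht, mul_le_mul_of_nonneg_left hmax hb]
  have hlim : Tendsto (fun ε => exp (-b * (τ - s)) * p s - ε * (1 + τ - s)) (nhdsWithin 0 (Ioi 0))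
      (nhds (exp (-b * (τ - s)) * p s)) := by
    have hcont : Continuous fun ε : ℝ => exp (-b * (τ - s)) * p s - ε * (1 + τ - s) := by fun_prop
    simpa using (hcont.tendsto 0).mono_left nhdsWithin_le_nhds
  exact le_of_tendsto hlim (eventually_nhdsWithin_of_forall hbarrier)

lemma neg_mul_posPart_le_sub (hF : LipschitzWith b F) (hF_anti : Antitone F) (y z : ℝ) :
    -(b * max (z - y) 0) ≤ F z - F y := by
  rcases le_total y z with hyz | hzy
  · have := hF.dist_le_mul z y
    rw [dist_eq, dist_eq, abs_of_nonneg (sub_nonneg.2 hyz)] at this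
    rw [max_eq_left (sub_nonneg.2 hyz)]
    exact (abs_le.1 this).1
  · simpa [max_eq_right (sub_nonpos.2 hzy)] using hF_anti hzy

theorem Trajectory.exp_neg_mul_le_sub (hF : LipschitzWith b F) (hF_anti : Antitone F)
    (hu : LocallyIntegrableOn u (Ici 0)) (hv : LocallyIntegrableOn v (Ici 0))
    (hx : Trajectory F x₀ u x) (hy : Trajectory F y₀ v y) (hs : 0 ≤ s) (hsτ : s ≤ τ)
    (hm : ∀ t ∈ Icc s τ, ∫ r in s..t, (u r - v r) ≤ m) (hm₀ : 0 ≤ x s - y s + m) :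
    exp (-b * (τ - s)) * (x s - y s + m) ≤ x τ - y τ - (∫ r in s..τ, (u r - v r)) + m := by
  set p : ℝ → ℝ := fun t => x s - y s + m + ∫ r in s..t, (F (x r) - F (y r))
  have hfield : ContinuousOn (fun r => F (x r) - F (y r)) (Icc s τ) :=
    (hx.continuousOn_field hF.continuous hs).sub (hy.continuousOn_field hF.continuous hs)
  have hp : ∀ t ∈ Icc s τ, x t - y t - (∫ r in s..t, (u r - v r)) + m = p t := fun t ht => by
    have hint := fun {w : ℝ → ℝ} (hw : LocallyIntegrableOn w (Ici 0)) =>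
      intervalIntegrable_of_locallyIntegrableOn_Ici hw hs (hs.trans ht.1)
    have hintF := fun {z z₀ w} (hz : Trajectory F z₀ w z) =>
      (hz.continuousOn_field hF.continuous hs).intervalIntegrable_of_Icc (μ := volume) ht.1
    simp only [p]
    rw [hx.eq_add_integral hF.continuous hu hs ht.1, hy.eq_add_integral hF.continuous hv hs ht.1,
      intervalIntegral.integral_sub (hint hu) (hint hv),
      intervalIntegral.integral_sub (hintF hx) (hintF hy)]
    ring
  have hderiv : ∀ t ∈ Ico s τ, HasDerivWithinAt p (F (x t) - F (y t)) (Ici t) t :=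
    fun t ht => (hasDerivWithinAt_integral_Ici hfield ht).const_add _
  have hp_cont : ContinuousOn p (Icc s τ) := by
    rw [← uIcc_of_le hsτ] at hfield ⊢
    exact (intervalIntegral.continuousOn_primitive_interval
      (hfield.integrableOn_compact (μ := volume) isCompact_uIcc)).const_add _
  have hps : p s = x s - y s + m := by simp [p]
  rw [hp τ (right_mem_Icc.2 hsτ), ← hps]
  refine exp_neg_mul_le_of_neg_mul_posPart_le_deriv b.coe_nonneg hsτ hp_cont hderiv
    (fun t ht => ?_) (hps ▸ hm₀)
  have hle : x t - y t ≤ p t := by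
    linarith [hp t (Ico_subset_Icc_self ht), hm t (Ico_subset_Icc_self ht)]
  calc -(b * max (p t) 0) ≤ -(b * max (x t - y t) 0) := by gcongr
    _ ≤ F (x t) - F (y t) := neg_mul_posPart_le_sub hF hF_anti _ _

theorem Trajectory.le_of_control_le (hF : LipschitzWith b F) (hF_anti : Antitone F)
    (hu : LocallyIntegrableOn u (Ici 0)) (hv : LocallyIntegrableOn v (Ici 0))
    (hx : Trajectory F x₀ u x) (hy : Trajectory F y₀ v y) (hs : 0 ≤ s) (hsτ : s ≤ τ)
    (hvu : ∀ᵐ t ∂volume.restrict (Icc s τ), v t ≤ u t) (hxy : y s ≤ x s) : y τ ≤ x τ := by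
  have hint : IntervalIntegrable (fun t => u t - v t) volume s τ :=
    (intervalIntegrable_of_locallyIntegrableOn_Ici hu hs (hs.trans hsτ)).sub
      (intervalIntegrable_of_locallyIntegrableOn_Ici hv hs (hs.trans hsτ))
  have hsub : 0 ≤ᵐ[volume.restrict (Icc s τ)] fun t => u t - v t := by
    filter_upwards [hvu] with t ht using sub_nonneg.2 ht
  have hmono : ∀ t ∈ Icc s τ, ∫ r in s..t, (u r - v r) ≤ ∫ r in s..τ, (u r - v r) := fun t ht =>
    intervalIntegral.integral_mono_interval le_rfl ht.1 ht.2
      (ae_mono (Measure.restrict_mono Ioc_subset_Icc_self le_rfl) hsub) hint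
  have hm₀ : 0 ≤ x s - y s + ∫ r in s..τ, (u r - v r) :=
    add_nonneg (sub_nonneg.2 hxy) (intervalIntegral.integral_nonneg_of_ae_restrict hsτ hsub)
  have hcomp := hx.exp_neg_mul_le_sub hF hF_anti hu hv hy hs hsτ hmono hm₀
  linarith [mul_nonneg (exp_pos (-b * (τ - s))).le hm₀]

lemma Trajectory.const (F : ℝ → ℝ) (a : ℝ) : Trajectory F a (fun _ => -F a) fun _ => a :=
  ⟨continuousOn_const, fun t _ => by simp⟩

lemma Trajectory.apply_zero (hx : Trajectory F x₀ u x) : x 0 = x₀ := by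
  simpa using hx.2 0 le_rfl

theorem Trajectory.nonneg (hF : LipschitzWith b F) (hF_anti : Antitone F) (hF₀ : 0 ≤ F 0)
    (hu : LocallyIntegrableOn u (Ici 0)) (hu₀ : ∀ᵐ t ∂volume.restrict (Ici 0), 0 ≤ u t)
    (hx : Trajectory F x₀ u x) (hx₀ : 0 ≤ x₀) {t : ℝ} (ht : 0 ≤ t) : 0 ≤ x t := by
  refine hx.le_of_control_le hF hF_anti hu (locallyIntegrableOn_const _) (.const F 0) le_rfl ht
    ?_ (hx.apply_zero ▸ hx₀)
  filter_upwards [ae_restrict_of_ae_restrict_of_subset Icc_subset_Ici_self hu₀] with t ht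
    using by linarith

end Trajectories

section CappedControl

/-- The mass of the control `u` above the level `N` on `[0, T]`. -/
noncomputable def excess (u : ℝ → ℝ) (N T : ℝ) : ℝ := ∫ t in (0:ℝ)..T, (u t - min (u t) N)

/-- The modification of `u` that is capped at the level `N` on `[0, T]` and in exchange increased
on `(T, T + β]` by the constant rate `excess u N T`; for `β ≤ 1` this repays at most the mass that
the cap has removed. -/
noncomputable def cappedControl (u : ℝ → ℝ) (N T β t : ℝ) : ℝ :=
  if t ≤ T then min (u t) N else if t ≤ T + β then u t + excess u N T else u t

variable {F : ℝ → ℝ} {b : ℝ≥0} {x₀ N T β t : ℝ} {u x y : ℝ → ℝ}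

lemma excess_nonneg (u : ℝ → ℝ) (N : ℝ) (hT : 0 ≤ T) : 0 ≤ excess u N T :=
  intervalIntegral.integral_nonneg_of_forall hT fun t => sub_nonneg.2 (min_le_left (u t) N)

lemma intervalIntegrable_sub_min (hu : LocallyIntegrableOn u (Ici 0)) (N : ℝ) (hT : 0 ≤ T) :
    IntervalIntegrable (fun t => u t - min (u t) N) volume 0 T := by
  have hint := intervalIntegrable_of_locallyIntegrableOn_Ici hu le_rfl hT
  have hconst : IntervalIntegrable (fun _ : ℝ => N) volume 0 T := intervalIntegrable_const
  exact hint.sub ⟨hint.1.inf hconst.1, hint.2.inf hconst.2⟩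

lemma excess_mono (hu : LocallyIntegrableOn u (Ici 0)) (N : ℝ) (ht : 0 ≤ t) (htT : t ≤ T) :
    excess u N t ≤ excess u N T :=
  intervalIntegral.integral_mono_interval le_rfl ht htT
    (ae_of_all _ fun s => sub_nonneg.2 (min_le_left (u s) N))
    (intervalIntegrable_sub_min hu N (ht.trans htT))

lemma cappedControl_of_le (ht : t ≤ T) : cappedControl u N T β t = min (u t) N := if_pos ht

lemma cappedControl_of_mem_Ioc (ht : t ∈ Ioc T (T + β)) :
    cappedControl u N T β t = u t + excess u N T := by
  rw [cappedControl, if_neg ht.1.not_ge, if_pos ht.2]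

lemma cappedControl_of_lt (hβ : 0 ≤ β) (ht : T + β < t) : cappedControl u N T β t = u t := by
  rw [cappedControl, if_neg (by linarith), if_neg ht.not_ge]

lemma cappedControl_le_add (hT : 0 ≤ T) (t : ℝ) :
    cappedControl u N T β t ≤ u t + excess u N T := by
  have := excess_nonneg u N hT
  rw [cappedControl]
  split_ifs <;> linarith [min_le_left (u t) N]

lemma cappedControl_pos (hN : 0 < N) (hT : 0 ≤ T) (hut : 0 < u t) :
    0 < cappedControl u N T β t := by
  have := excess_nonneg u N hT
  rw [cappedControl]
  split_ifs <;> positivity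

lemma measurable_cappedControl (hu : Measurable u) (N T β : ℝ) :
    Measurable (cappedControl u N T β) :=
  .ite measurableSet_Iic (hu.min measurable_const)
    (.ite measurableSet_Iic (hu.add_const _) hu)

lemma admissible_cappedControl (hu : Admissible u) (hN : 0 < N) (hT : 0 ≤ T) (β : ℝ) :
    Admissible (cappedControl u N T β) := by
  have hpos : ∀ᵐ t ∂volume.restrict (Ici 0), 0 < cappedControl u N T β t := by
    filter_upwards [hu.2.2] with t ht using cappedControl_pos hN hT ht
  refine ⟨measurable_cappedControl hu.1 N T β, fun R hR => ?_, hpos⟩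
  refine ((hu.2.1 R hR).add (integrableOn_const (C := excess u N T) (by simp))).mono'
    (measurable_cappedControl hu.1 N T β).aestronglyMeasurable ?_
  filter_upwards [ae_restrict_of_ae_restrict_of_subset Icc_subset_Ici_self hpos] with t ht
  rw [norm_of_nonneg ht.le]
  exact cappedControl_le_add hT t

lemma integral_sub_cappedControl_of_le (ht₀ : 0 ≤ t) (ht : t ≤ T) :
    ∫ s in (0:ℝ)..t, (u s - cappedControl u N T β s) = excess u N t :=
  intervalIntegral.integral_congr fun _ hs => by
    rw [uIcc_of_le ht₀] at hs
    simp only [cappedControl_of_le (hs.2.trans ht)]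

lemma integral_sub_cappedControl (hu : Admissible u) (hN : 0 < N) (hT : 0 ≤ T)
    (ht : t ∈ Icc T (T + β)) :
    ∫ s in (0:ℝ)..t, (u s - cappedControl u N T β s) = excess u N T * (1 - (t - T)) := by
  have hint : ∀ a c, 0 ≤ a → 0 ≤ c →
      IntervalIntegrable (fun s => u s - cappedControl u N T β s) volume a c := fun a c ha hc =>
    (intervalIntegrable_of_locallyIntegrableOn_Ici hu.locallyIntegrableOn ha hc).sub
      (intervalIntegrable_of_locallyIntegrableOn_Ici
        (admissible_cappedControl hu hN hT β).locallyIntegrableOn ha hc)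
  have hrepay : ∫ s in T..t, (u s - cappedControl u N T β s) = ∫ _ in T..t, -excess u N T := by
    refine intervalIntegral.integral_congr_ae (ae_of_all _ fun _ hs => ?_)
    rw [uIoc_of_le ht.1] at hs
    rw [cappedControl_of_mem_Ioc ⟨hs.1, hs.2.trans ht.2⟩]
    ring
  rw [← intervalIntegral.integral_add_adjacent_intervals (hint 0 T le_rfl hT)
    (hint T t hT (hT.trans ht.1)), integral_sub_cappedControl_of_le hT le_rfl, hrepay,
    intervalIntegral.integral_const, smul_eq_mul]
  ring

lemma integral_sub_cappedControl_le_excess (hu : Admissible u) (hN : 0 < N) (hT : 0 ≤ T)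
    (ht : t ∈ Icc 0 (T + β)) :
    ∫ s in (0:ℝ)..t, (u s - cappedControl u N T β s) ≤ excess u N T := by
  rcases le_total t T with htT | hTt
  · rw [integral_sub_cappedControl_of_le ht.1 htT]
    exact excess_mono hu.locallyIntegrableOn N ht.1 htT
  · rw [integral_sub_cappedControl hu hN hT ⟨hTt, ht.2⟩]
    exact mul_le_of_le_one_right (excess_nonneg u N hT) (by linarith)

lemma Trajectory.cappedControl_le_of_mem_Icc (hF : LipschitzWith b F) (hF_anti : Antitone F)
    (hu : Admissible u) (hN : 0 < N) (hT : 0 ≤ T) (hβ : β ≤ exp (-b * (T + β)))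
    (hx : Trajectory F x₀ u x) (hy : Trajectory F x₀ (cappedControl u N T β) y)
    (ht : t ∈ Icc T (T + β)) : y t ≤ x t := by
  have hexcess := excess_nonneg u N hT
  have hxy : x 0 - y 0 = 0 := by rw [hx.apply_zero, hy.apply_zero, sub_self]
  have hcomp := hx.exp_neg_mul_le_sub hF hF_anti hu.locallyIntegrableOn
    (admissible_cappedControl hu hN hT β).locallyIntegrableOn hy le_rfl (hT.trans ht.1)
    (fun s hs => integral_sub_cappedControl_le_excess hu hN hT ⟨hs.1, hs.2.trans ht.2⟩)
    (by rwa [hxy, zero_add])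
  rw [hxy, zero_add, sub_zero, integral_sub_cappedControl hu hN hT ht] at hcomp
  have hexp : t - T ≤ exp (-b * t) := calc
    t - T ≤ β := by linarith [ht.2]
    _ ≤ exp (-b * (T + β)) := hβ
    _ ≤ exp (-b * t) := exp_le_exp.2 (mul_le_mul_of_nonpos_left ht.2 (neg_nonpos.2 b.coe_nonneg))
  linarith [mul_le_mul_of_nonneg_right hexp hexcess]

theorem Trajectory.cappedControl_le (hF : LipschitzWith b F) (hF_anti : Antitone F)
    (hu : Admissible u) (hN : 0 < N) (hT : 0 ≤ T) (hβ₀ : 0 ≤ β) (hβ : β ≤ exp (-b * (T + β)))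
    (hx : Trajectory F x₀ u x) (hy : Trajectory F x₀ (cappedControl u N T β) y) (ht : 0 ≤ t) :
    y t ≤ x t := by
  have hcomp := fun {s τ : ℝ} => hx.le_of_control_le (s := s) (τ := τ) hF hF_anti
    hu.locallyIntegrableOn (admissible_cappedControl hu hN hT β).locallyIntegrableOn hy
  have hmid := fun {s : ℝ} => hx.cappedControl_le_of_mem_Icc (t := s) hF hF_anti hu hN hT hβ hy
  rcases le_total t T with htT | hTt
  · refine hcomp le_rfl ht (ae_restrict_of_forall_mem measurableSet_Icc fun s hs => ?_)
      (hx.apply_zero.trans hy.apply_zero.symm).ge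
    rw [cappedControl_of_le (hs.2.trans htT)]
    exact min_le_left _ _
  rcases le_total t (T + β) with htTβ | hTβt
  · exact hmid ⟨hTt, htTβ⟩
  · refine hcomp (by positivity) hTβt ?_ (hmid ⟨by linarith, le_rfl⟩)
    rw [← restrict_Ioc_eq_restrict_Icc]
    exact ae_restrict_of_forall_mem measurableSet_Ioc fun s hs => (cappedControl_of_lt hβ₀ hs.1).le

end CappedControl

section Objective

lemma integral_pos_of_ae_pos {α : Type*} [MeasurableSpace α] {μ : Measure α} [NeZero μ]
    {f : α → ℝ} (hf : ∀ᵐ a ∂μ, 0 < f a) (hint : Integrable f μ) : 0 < ∫ a, f a ∂μ := by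
  have hf₀ : 0 ≤ᵐ[μ] f := hf.mono fun _ ha => ha.le
  refine (integral_nonneg_of_ae hf₀).lt_of_ne' fun hzero => ?_
  obtain ⟨a, hpos, ha⟩ := (hf.and ((integral_eq_zero_iff_of_nonneg_ae hf₀ hint).1 hzero)).exists
  exact hpos.ne' ha

theorem mul_sq_div_le_integral_of_mul_inv_le {g h : ℝ → ℝ} {a b A κ : ℝ} (hab : a < b)
    (hκ : 0 ≤ κ) (hg : IntervalIntegrable g volume a b) (hh : IntervalIntegrable h volume a b)
    (hg₀ : ∀ᵐ t ∂volume.restrict (Ioc a b), 0 < g t) (hA : ∫ t in a..b, g t ≤ A)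
    (hle : ∀ᵐ t ∂volume.restrict (Ioc a b), κ * (g t)⁻¹ ≤ h t) :
    κ * (b - a) ^ 2 / A ≤ ∫ t in a..b, h t := by
  have : NeZero (volume.restrict (Ioc a b)) := ⟨by simp [Measure.restrict_eq_zero, hab]⟩
  have hA₀ : 0 < A := by
    rw [intervalIntegral.integral_of_le hab.le] at hA
    exact (integral_pos_of_ae_pos hg₀ hg.1).trans_le hA
  have hba : 0 < b - a := sub_pos.2 hab
  -- `2 / M - r / M ^ 2` is the tangent of `r ↦ 1 / r` at the largest possible mean `M` of `g`.
  set M := A / (b - a)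
  have hM : 0 < M := div_pos hA₀ hba
  have htangent : ∀ r > 0, 2 / M - r / M ^ 2 ≤ r⁻¹ := fun r hr => by
    have hdiff : r⁻¹ - (2 / M - r / M ^ 2) = (r - M) ^ 2 / (r * M ^ 2) := by field_simp; ring
    linarith [show 0 ≤ (r - M) ^ 2 / (r * M ^ 2) by positivity]
  have hlin : IntervalIntegrable (fun t => 2 / M - g t / M ^ 2) volume a b :=
    intervalIntegrable_const.sub (hg.div_const _)
  calc κ * (b - a) ^ 2 / A = κ * ((b - a) * (2 / M) - A / M ^ 2) := by
        simp only [M]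
        field_simp
        ring
    _ ≤ κ * ((b - a) * (2 / M) - (∫ t in a..b, g t) / M ^ 2) := by gcongr
    _ = ∫ t in a..b, κ * (2 / M - g t / M ^ 2) := by
        rw [intervalIntegral.integral_const_mul,
          intervalIntegral.integral_sub intervalIntegrable_const (hg.div_const _),
          intervalIntegral.integral_const, intervalIntegral.integral_div, smul_eq_mul]
    _ ≤ ∫ t in a..b, h t := by
        refine intervalIntegral.integral_mono_ae_restrict hab.le (hlin.const_mul κ) hh ?_
        rw [← restrict_Ioc_eq_restrict_Icc]
        filter_upwards [hg₀, hle] with t hgt hlet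
        exact (mul_le_mul_of_nonneg_left (htangent _ hgt) hκ).trans hlet

lemma intervalIntegral_le_exp_mul_setIntegral {f : ℝ → ℝ} {ρ t : ℝ} (hρ : 0 ≤ ρ) (ht : 0 ≤ t)
    (hf₀ : ∀ᵐ s ∂volume.restrict (Ioi 0), 0 ≤ f s)
    (hint : IntegrableOn (fun s => exp (-ρ * s) * f s) (Ioi 0)) :
    ∫ s in (0:ℝ)..t, f s ≤ exp (ρ * t) * ∫ s in Ioi 0, exp (-ρ * s) * f s := by
  have hf₀' := ae_restrict_of_ae_restrict_of_subset (fun _ hs => hs.1 : Ioc 0 t ⊆ Ioi 0) hf₀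
  rw [intervalIntegral.integral_of_le ht]
  calc ∫ s in Ioc 0 t, f s ≤ ∫ s in Ioc 0 t, exp (ρ * t) * (exp (-ρ * s) * f s) := by
        refine integral_mono_of_nonneg hf₀'
          ((hint.mono_set Ioc_subset_Ioi_self).const_mul _) ?_
        filter_upwards [hf₀', ae_restrict_mem measurableSet_Ioc] with s hs hst
        rw [← mul_assoc, ← exp_add]
        exact le_mul_of_one_le_left hs (one_le_exp (by nlinarith [hst.2]))
    _ = exp (ρ * t) * ∫ s in Ioc 0 t, exp (-ρ * s) * f s := integral_const_mul _ _
    _ ≤ _ := by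
        refine mul_le_mul_of_nonneg_left
          (setIntegral_mono_set hint ?_ Ioc_subset_Ioi_self.eventuallyLE) (exp_pos _).le
        filter_upwards [hf₀] with s hs using by positivity

lemma log_sub_log_min_le {r N : ℝ} (hr : 0 < r) (hN : 0 < N) :
    log r - log (min r N) ≤ (r - min r N) / N := by
  rcases le_total r N with hrN | hNr
  · simp [min_eq_left hrN]
  · rw [min_eq_right hNr, ← log_div hr.ne' hN.ne', sub_div, div_self hN.ne']
    exact log_le_sub_one_of_pos (div_pos hr hN)

lemma mul_inv_add_le_log_add_sub_log {r κ : ℝ} (hr : 0 < r) (hκ : 0 ≤ κ) :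
    κ * (r + κ)⁻¹ ≤ log (r + κ) - log r := by
  have hrκ : 0 < r + κ := by positivity
  rw [← log_div hrκ.ne' hr.ne']
  calc κ * (r + κ)⁻¹ = 1 - ((r + κ) / r)⁻¹ := by field_simp; ring
    _ ≤ log ((r + κ) / r) := one_sub_inv_le_log_of_pos (by positivity)

variable {ρ c K₁ N T β : ℝ} {u v x y : ℝ → ℝ}

lemma Admissible.integral_exp_mul_pos (hu : Admissible u)
    (hw : IntegrableOn (fun t => exp (-ρ * t) * u t) (Ioi 0)) :
    0 < ∫ t in Ioi 0, exp (-ρ * t) * u t := by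
  have : NeZero (volume.restrict (Ioi (0:ℝ))) := ⟨by simp [Measure.restrict_eq_zero]⟩
  refine integral_pos_of_ae_pos ?_ hw
  filter_upwards [hu.ae_pos_restrict Ioi_subset_Ici_self] with t hut
    using by positivity

lemma neg_excess_div_le_integral_log_cappedControl_sub_log (hρ : 0 ≤ ρ) (hu : Admissible u)
    (hN : 0 < N) (hT : 0 ≤ T)
    (hint : IntervalIntegrable
      (fun t => exp (-ρ * t) * (log (cappedControl u N T β t) - log (u t))) volume 0 T) :
    -(excess u N T / N) ≤
      ∫ t in (0:ℝ)..T, exp (-ρ * t) * (log (cappedControl u N T β t) - log (u t)) := by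
  rw [excess, ← intervalIntegral.integral_div, ← intervalIntegral.integral_neg]
  refine intervalIntegral.integral_mono_ae_restrict hT
    ((intervalIntegrable_sub_min hu.locallyIntegrableOn N hT).div_const N).neg hint ?_
  filter_upwards [hu.ae_pos_restrict Icc_subset_Ici_self,
    ae_restrict_mem measurableSet_Icc] with t hut ht
  rw [cappedControl_of_le ht.2]
  have hloss := log_sub_log_min_le hut hN
  have hloss₀ : 0 ≤ log (u t) - log (min (u t) N) :=
    sub_nonneg.2 (log_le_log (lt_min hut hN) (min_le_left _ _))
  have hexp : exp (-ρ * t) ≤ 1 := exp_le_one_iff.2 (by nlinarith [ht.1])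
  linarith [mul_le_of_le_one_left hloss₀ hexp]

lemma le_integral_log_cappedControl_sub_log {A : ℝ} (hρ : 0 ≤ ρ) (hu : Admissible u) (hN : 0 < N)
    (hT : 0 ≤ T) (hβ : 0 < β) (hA : ∫ t in T..(T + β), cappedControl u N T β t ≤ A)
    (hint : IntervalIntegrable
      (fun t => exp (-ρ * t) * (log (cappedControl u N T β t) - log (u t))) volume T (T + β)) :
    exp (-ρ * (T + β)) * excess u N T * β ^ 2 / A ≤
      ∫ t in T..(T + β), exp (-ρ * t) * (log (cappedControl u N T β t) - log (u t)) := by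
  have hv := admissible_cappedControl hu hN hT β
  have hexcess := excess_nonneg u N hT
  have hsub : Ioc T (T + β) ⊆ Ici 0 := fun t ht => hT.trans ht.1.le
  have hbound := mul_sq_div_le_integral_of_mul_inv_le (lt_add_of_pos_right T hβ)
    (mul_nonneg (exp_pos (-ρ * (T + β))).le hexcess)
    (intervalIntegrable_of_locallyIntegrableOn_Ici hv.locallyIntegrableOn hT (by positivity))
    hint (hv.ae_pos_restrict hsub) hA ?_
  · rwa [add_sub_cancel_left] at hbound
  filter_upwards [hu.ae_pos_restrict hsub,
    ae_restrict_mem measurableSet_Ioc] with t hut ht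
  rw [cappedControl_of_mem_Ioc ht, mul_assoc]
  have hexp : exp (-ρ * (T + β)) ≤ exp (-ρ * t) :=
    exp_le_exp.2 (mul_le_mul_of_nonpos_left ht.2 (neg_nonpos.2 hρ))
  exact mul_le_mul hexp (mul_inv_add_le_log_add_sub_log hut hexcess) (by positivity)
    (exp_pos _).le

lemma integral_cappedControl_le (hu : Admissible u) (hN : 0 < N) (hT : 0 ≤ T) (hβ : 0 ≤ β)
    (hβ_le : β ≤ 1) :
    ∫ t in T..(T + β), cappedControl u N T β t ≤ ∫ t in (0:ℝ)..(T + β), u t := by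
  have hv := admissible_cappedControl hu hN hT β
  have hTβ : 0 ≤ T + β := by positivity
  have hint := fun {w : ℝ → ℝ} (hw : Admissible w) =>
    intervalIntegrable_of_locallyIntegrableOn_Ici hw.locallyIntegrableOn le_rfl hTβ
  calc ∫ t in T..(T + β), cappedControl u N T β t
      ≤ ∫ t in (0:ℝ)..(T + β), cappedControl u N T β t :=
        intervalIntegral.integral_mono_interval hT (by linarith) le_rfl
          ((hv.ae_pos_restrict fun _ ht => ht.1.le).mono fun _ ht => ht.le) (hint hv)
    _ = (∫ t in (0:ℝ)..(T + β), u t) - excess u N T * (1 - β) := by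
        rw [← add_sub_cancel_left T β, ← integral_sub_cappedControl hu hN hT
          (right_mem_Icc.2 (by linarith)), intervalIntegral.integral_sub (hint hu) (hint hv)]
        simp
    _ ≤ ∫ t in (0:ℝ)..(T + β), u t :=
        sub_le_self _ (mul_nonneg (excess_nonneg u N hT) (sub_nonneg.2 hβ_le))

lemma integral_cappedControl_le_exp_mul (hρ : 0 ≤ ρ) (hu : Admissible u) (hN : 0 < N) (hT : 0 ≤ T)
    (hβ : 0 ≤ β) (hβ_le : β ≤ 1) (hw : IntegrableOn (fun t => exp (-ρ * t) * u t) (Ioi 0)) :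
    ∫ t in T..(T + β), cappedControl u N T β t ≤
      exp (ρ * (T + β)) * ∫ t in Ioi 0, exp (-ρ * t) * u t :=
  (integral_cappedControl_le hu hN hT hβ hβ_le).trans <|
    intervalIntegral_le_exp_mul_setIntegral hρ (by positivity)
      ((hu.ae_pos_restrict Ioi_subset_Ici_self).mono fun _ ht => ht.le) hw

lemma abs_log_cappedControl_le (hT : 0 ≤ T) {t : ℝ} (hut : 0 < u t) :
    |log (cappedControl u N T β t)| ≤ |log (u t)| + |log N| + (u t + excess u N T) := by
  have hexcess := excess_nonneg u N hT
  have hlog := abs_nonneg (log (u t))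
  have hlogN := abs_nonneg (log N)
  rw [cappedControl]
  split_ifs
  · rcases min_choice (u t) N with hmin | hmin <;> rw [hmin] <;> linarith
  · have hle : log (u t) ≤ log (u t + excess u N T) :=
      log_le_log hut (le_add_of_nonneg_right hexcess)
    have hge := log_le_sub_one_of_pos (by positivity : 0 < u t + excess u N T)
    exact abs_le.2 ⟨by linarith [neg_abs_le (log (u t))], by linarith⟩
  · linarith

lemma integrableOn_log_cappedControl (hρ : 0 < ρ) (hu : Admissible u) (hT : 0 ≤ T)
    (hw : IntegrableOn (fun t => exp (-ρ * t) * u t) (Ioi 0))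
    (hlog : IntegrableOn (fun t => exp (-ρ * t) * log (u t)) (Ioi 0)) (N β : ℝ) :
    IntegrableOn (fun t => exp (-ρ * t) * log (cappedControl u N T β t)) (Ioi 0) := by
  have hexp := integrableOn_exp_mul_Ioi (neg_lt_zero.2 hρ) 0
  have hmeas := measurable_cappedControl hu.1 N T β
  refine Integrable.mono' ((hlog.norm.add (hexp.mul_const |log N|)).add
    (hw.add (hexp.mul_const (excess u N T)))) (by fun_prop) ?_
  filter_upwards [hu.ae_pos_restrict Ioi_subset_Ici_self] with t hut
  simp only [Pi.add_apply, norm_mul, norm_of_nonneg (exp_pos _).le, norm_eq_abs]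
  linarith [mul_le_mul_of_nonneg_left (abs_log_cappedControl_le (N := N) (β := β) hT hut)
    (exp_pos (-ρ * t)).le]

theorem integral_log_cappedControl_sub_log_nonneg (hρ : 0 ≤ ρ) (hu : Admissible u) (hT : 0 ≤ T)
    (hβ : 0 < β) (hβ_le : β ≤ 1) (hN : K₁ * β⁻¹ ^ 2 * exp (2 * ρ * (T + β)) ≤ N)
    (hw : IntegrableOn (fun t => exp (-ρ * t) * u t) (Ioi 0))
    (hK₁ : ∫ t in Ioi 0, exp (-ρ * t) * u t ≤ K₁)
    (hint : IntegrableOn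
      (fun t => exp (-ρ * t) * (log (cappedControl u N T β t) - log (u t))) (Ioi 0)) :
    0 ≤ ∫ t in Ioi 0, exp (-ρ * t) * (log (cappedControl u N T β t) - log (u t)) := by
  have hTβ : 0 ≤ T + β := by positivity
  have hK₁_pos : 0 < K₁ := (hu.integral_exp_mul_pos hw).trans_le hK₁
  have hN₀ : 0 < N := lt_of_lt_of_le (by positivity) hN
  have hinterval : ∀ a c, 0 ≤ a → a ≤ c → IntervalIntegrable
      (fun t => exp (-ρ * t) * (log (cappedControl u N T β t) - log (u t))) volume a c :=
    fun a c ha hac => (intervalIntegrable_iff_integrableOn_Ioc_of_le hac).2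
      (hint.mono_set fun t ht => ha.trans_lt ht.1)
  have hbudget := (integral_cappedControl_le_exp_mul hρ hu hN₀ hT hβ.le hβ_le hw).trans
    (mul_le_mul_of_nonneg_left hK₁ (exp_pos _).le)
  have hloss := neg_excess_div_le_integral_log_cappedControl_sub_log hρ hu hN₀ hT
    (hinterval 0 T le_rfl hT)
  have hgain := le_integral_log_cappedControl_sub_log hρ hu hN₀ hT hβ hbudget
    (hinterval T (T + β) hT (by linarith))
  have htail : ∫ t in Ioi (T + β), exp (-ρ * t) * (log (cappedControl u N T β t) - log (u t)) = 0 :=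
    setIntegral_eq_zero_of_forall_eq_zero fun t ht => by
      rw [cappedControl_of_lt hβ.le ht, sub_self, mul_zero]
  have hbalance : excess u N T / N ≤
      exp (-ρ * (T + β)) * excess u N T * β ^ 2 / (exp (ρ * (T + β)) * K₁) := calc
    excess u N T / N ≤ excess u N T / (K₁ * β⁻¹ ^ 2 * exp (2 * ρ * (T + β))) := by
      gcongr
      exact excess_nonneg u N hT
    _ = _ := by
      rw [show 2 * ρ * (T + β) = ρ * (T + β) + ρ * (T + β) by ring, neg_mul, exp_neg, exp_add]
      field_simp
  rw [← intervalIntegral.integral_interval_add_Ioi hint (hint.mono_set fun t ht => hTβ.trans_lt ht),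
    htail, add_zero, ← intervalIntegral.integral_add_adjacent_intervals
      (hinterval 0 T le_rfl hT) (hinterval T (T + β) hT (by linarith))]
  linarith

lemma ObjIntegrable.integrableOn_sq (hc : 0 ≤ c) (hu : Admissible u) (hx : ContinuousOn x (Ici 0))
    (hw : IntegrableOn (fun t => exp (-ρ * t) * u t) (Ioi 0)) (ho : ObjIntegrable ρ c u x) :
    IntegrableOn (fun t => exp (-ρ * t) * (c * x t ^ 2)) (Ioi 0) := by
  have hx_meas : AEMeasurable x (volume.restrict (Ioi 0)) :=
    (hx.mono Ioi_subset_Ici_self).aemeasurable measurableSet_Ioi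
  refine (hw.sub ho).mono' (by fun_prop) ?_
  filter_upwards [hu.ae_pos_restrict Ioi_subset_Ici_self] with t hut
  have hlog : log (u t) ≤ u t := by linarith [log_le_sub_one_of_pos hut]
  rw [norm_of_nonneg (by positivity), Pi.sub_apply, ← mul_sub]
  gcongr
  linarith

lemma ObjIntegrable.integrableOn_log (ho : ObjIntegrable ρ c u x)
    (hsq : IntegrableOn (fun t => exp (-ρ * t) * (c * x t ^ 2)) (Ioi 0)) :
    IntegrableOn (fun t => exp (-ρ * t) * log (u t)) (Ioi 0) :=
  (ho.add hsq).congr (ae_of_all _ fun t => by simp only [Pi.add_apply]; ring)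

lemma integrableOn_sq_of_le (hc : 0 ≤ c)
    (hsq : IntegrableOn (fun t => exp (-ρ * t) * (c * x t ^ 2)) (Ioi 0))
    (hy : ContinuousOn y (Ici 0)) (hyx : ∀ t, 0 ≤ t → 0 ≤ y t ∧ y t ≤ x t) :
    IntegrableOn (fun t => exp (-ρ * t) * (c * y t ^ 2)) (Ioi 0) := by
  have hy_meas : AEMeasurable y (volume.restrict (Ioi 0)) :=
    (hy.mono Ioi_subset_Ici_self).aemeasurable measurableSet_Ioi
  refine Integrable.mono' hsq (by fun_prop) ?_
  filter_upwards [ae_restrict_mem measurableSet_Ioi] with t ht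
  obtain ⟨hy₀, hle⟩ := hyx t (mem_Ioi.1 ht).le
  rw [norm_of_nonneg (by positivity)]
  gcongr

lemma objIntegrable_of_integrableOn
    (hlog : IntegrableOn (fun t => exp (-ρ * t) * log (u t)) (Ioi 0))
    (hsq : IntegrableOn (fun t => exp (-ρ * t) * (c * x t ^ 2)) (Ioi 0)) : ObjIntegrable ρ c u x :=
  (hlog.sub hsq).congr (ae_of_all _ fun t => by simp only [Pi.sub_apply]; ring)

lemma objective_le_objective (hc : 0 ≤ c) (hu : ObjIntegrable ρ c u x) (hv : ObjIntegrable ρ c v y)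
    (hyx : ∀ t, 0 ≤ t → 0 ≤ y t ∧ y t ≤ x t)
    (hint : IntegrableOn (fun t => exp (-ρ * t) * (log (v t) - log (u t))) (Ioi 0))
    (hlog : 0 ≤ ∫ t in Ioi 0, exp (-ρ * t) * (log (v t) - log (u t))) :
    objective ρ c u x ≤ objective ρ c v y := by
  rw [← sub_nonneg, objective, objective, ← integral_sub hv hu]
  refine hlog.trans (setIntegral_mono_on hint (hv.sub hu) measurableSet_Ioi fun t ht => ?_)
  obtain ⟨hy₀, hle⟩ := hyx t (mem_Ioi.1 ht).le
  have hsq : c * y t ^ 2 ≤ c * x t ^ 2 := by gcongr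
  rw [← mul_sub]
  exact mul_le_mul_of_nonneg_left (by linarith) (exp_pos _).le

end Objective

theorem uniform_localization_above_general {ρ c x₀ K₁ T β N : ℝ} {b₀ : ℝ≥0} {F : ℝ → ℝ}
    (hρ : 0 < ρ) (hc : 0 ≤ c) (hx₀ : 0 ≤ x₀) (hF : LipschitzWith b₀ F) (hF_anti : Antitone F)
    (hF₀ : 0 ≤ F 0) (hT : 0 ≤ T) (hβ : 0 < β) (hβ_le : β ≤ exp (-b₀ * (T + β)))
    (hN : K₁ * β⁻¹ ^ 2 * exp (2 * ρ * (T + β)) ≤ N) {u x : ℝ → ℝ} (hu : Admissible u)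
    (hx : Trajectory F x₀ u x) (hw : IntegrableOn (fun t => exp (-ρ * t) * u t) (Ioi 0))
    (hK₁ : ∫ t in Ioi 0, exp (-ρ * t) * u t ≤ K₁) (ho : ObjIntegrable ρ c u x) :
    ∃ ut xt : ℝ → ℝ,
      Admissible ut ∧ Trajectory F x₀ ut xt ∧
      (∀ᵐ t ∂volume.restrict (Icc 0 T), ut t = min (u t) N) ∧
      (∀ t, 0 ≤ t → 0 ≤ xt t ∧ xt t ≤ x t) ∧
      ObjIntegrable ρ c ut xt ∧ objective ρ c u x ≤ objective ρ c ut xt := by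
  have hK₁_pos : 0 < K₁ := (hu.integral_exp_mul_pos hw).trans_le hK₁
  have hN₀ : 0 < N := lt_of_lt_of_le (by positivity) hN
  have hβ_le_one : β ≤ 1 := hβ_le.trans (exp_le_one_iff.2
    (mul_nonpos_of_nonpos_of_nonneg (neg_nonpos.2 b₀.coe_nonneg) (by positivity)))
  have hv := admissible_cappedControl hu hN₀ hT β
  obtain ⟨y, hy⟩ := exists_trajectory hF hv.locallyIntegrableOn x₀
  have hyx : ∀ t, 0 ≤ t → 0 ≤ y t ∧ y t ≤ x t := fun t ht =>
    ⟨hy.nonneg hF hF_anti hF₀ hv.locallyIntegrableOn (hv.2.2.mono fun _ h => h.le) hx₀ ht,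
      hx.cappedControl_le hF hF_anti hu hN₀ hT hβ.le hβ_le hy ht⟩
  have hsq := ho.integrableOn_sq hc hu hx.1 hw
  have hlog := ho.integrableOn_log hsq
  have hlog' := integrableOn_log_cappedControl hρ hu hT hw hlog N β
  have hdiff : IntegrableOn
      (fun t => exp (-ρ * t) * (log (cappedControl u N T β t) - log (u t))) (Ioi 0) := by
    simp only [mul_sub]
    exact hlog'.sub hlog
  have ho' := objIntegrable_of_integrableOn hlog' (integrableOn_sq_of_le hc hsq hy.1 hyx)
  refine ⟨cappedControl u N T β, y, hv, hy, ?_, hyx, ho', ?_⟩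
  · exact ae_restrict_of_forall_mem measurableSet_Icc fun t ht => cappedControl_of_le ht.2
  · exact objective_le_objective hc ho ho' hyx hdiff
      (integral_log_cappedControl_sub_log_nonneg hρ.le hu hT hβ hβ_le_one hN hw hK₁ hdiff)

/-- Uniform localization from above: a control in a maximizing sequence can be
truncated above by `N = K₁ β⁻² e^{2ρ(T+β)}` on `[0,T]` without decreasing the
objective value, while not increasing the trajectory. -/
theorem uniform_localization_above
    (ρ c x₀ b₀ K₁ T β N : ℝ) (F : ℝ → ℝ)
    (hρ : 0 < ρ) (hc : 0 < c) (hx₀ : 0 ≤ x₀) (hb₀ : 0 < b₀)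
    (hF : ContDiff ℝ 1 F) (hF0 : F 0 = 0)
    (hF' : ∀ y : ℝ, -b₀ ≤ deriv F y ∧ deriv F y ≤ 0)
    (hK₁ : 1 ≤ K₁) (hT : 0 < T)
    (hβpos : 0 < β) (hβeq : Real.log β + b₀ * β = -T * b₀)
    (hN : N = K₁ * β⁻¹ ^ 2 * Real.exp (2 * ρ * (T + β))) :
    ∀ u x : ℝ → ℝ, Admissible u → Trajectory F x₀ u x →
      IntegrableOn (fun t => Real.exp (-ρ * t) * u t) (Set.Ioi (0:ℝ)) →
      (∫ t in Set.Ioi (0:ℝ), Real.exp (-ρ * t) * u t) ≤ K₁ →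
      ObjIntegrable ρ c u x →
      ∃ ut xt : ℝ → ℝ,
        Admissible ut ∧ Trajectory F x₀ ut xt ∧
        (∀ᵐ t ∂(volume.restrict (Set.Icc (0:ℝ) T)), ut t = min (u t) N) ∧
        (∀ t : ℝ, 0 ≤ t → 0 ≤ xt t ∧ xt t ≤ x t) ∧
        ObjIntegrable ρ c ut xt ∧
        objective ρ c u x ≤ objective ρ c ut xt := by
  intro u x hu hx hw hK ho
  have hF_diff : Differentiable ℝ F := hF.differentiable one_ne_zero
  have hF_lip : LipschitzWith ⟨b₀, hb₀.le⟩ F := lipschitzWith_of_nnnorm_deriv_le hF_diff fun y =>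
    abs_le.2 ⟨(hF' y).1, (hF' y).2.trans hb₀.le⟩
  have hβ_exp : β = Real.exp (-b₀ * (T + β)) := by
    rw [← show Real.log β = -b₀ * (T + β) by linarith, Real.exp_log hβpos]
  exact uniform_localization_above_general hρ hc.le hx₀ hF_lip
    (antitone_of_deriv_nonpos hF_diff fun y => (hF' y).2) hF0.ge hT.le hβpos hβ_exp.le hN.ge hu hx
    hw hK ho
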